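/- Let G₁ be an r₁-regular graph on n₁ vertices and m₁ edges, and let G₂ be an arbitrary graph on n₂ vertices. Then for each α ∈ [0,1], the characteristic polynomial of A_α(G₁⟨e⟩G₂), where G₁⟨e⟩G₂ is the R-edge join, satisfies ψ_{A_α(G₁⟨e⟩G₂)}(x) = (x−2α−αn₂)^{m₁−n₁} · ψ_{A_α(G₂)}(x−αm₁) · ∏_{i=2}^{n₁} ( x² − (2α+αr₁+αn₂+λ_i(A_α(G₁)))x + α²r₁n₂ + 3αr₁ − r₁ − (1−3α−αn₂)λ_i(A_α(G₁)) ) · ( x² − (2α+αr₁+αn₂+r₁)x + α²r₁n₂ + 6αr₁ − 2r₁ + αr₁n₂ − m₁(1−α)²(x−αr₁−r₁)·Γ_{A_α(G₂)}(x−αm₁) ), where λ₁(A_α(G₁)) ≥ ⋯ ≥ λ_{n₁}(A_α(G₁)) are the A_α-eigenvalues of G₁. -/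

import Mathlib

open Matrix Polynomial
open scoped Classical

noncomputable section

/-- `A_α(G) = α·D(G) + (1-α)·A(G)`, where `D(G)` is the diagonal degree matrix and
`A(G)` the adjacency matrix. -/
def Aalpha {V : Type*} [Fintype V] (G : SimpleGraph V) (α : ℝ) : Matrix V V ℝ :=
  α • Matrix.diagonal (fun v => (G.degree v : ℝ)) + (1 - α) • G.adjMatrix ℝ

/-- The `M`-coronal `Γ_M(x) = 1ᵀ (xI − M)⁻¹ 1`, i.e. the sum of the entries of
`(xI − M)⁻¹`. -/
def coronal {n : Type*} [Fintype n] (M : Matrix n n ℝ) (x : ℝ) : ℝ :=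
  ∑ i, ∑ j, (x • (1 : Matrix n n ℝ) - M)⁻¹ i j

/-- The `R`-edge join `G₁⟨e⟩G₂`: take the `R`-graph `R(G₁)` (for each edge of `G₁` a
new vertex joined to both of its endpoints) together with `G₂`, and join every inserted
vertex of `R(G₁)` with every vertex of `G₂`. -/
def rEdgeJoin {V₁ V₂ : Type*} (G₁ : SimpleGraph V₁) (G₂ : SimpleGraph V₂) :
    SimpleGraph (V₁ ⊕ (↥G₁.edgeSet ⊕ V₂)) :=
  SimpleGraph.fromRel fun a b =>
    match a, b with
    | Sum.inl v, Sum.inl w => G₁.Adj v w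
    | Sum.inl v, Sum.inr (Sum.inl e) => v ∈ (e : Sym2 V₁)
    | Sum.inr (Sum.inl _), Sum.inr (Sum.inr _) => True
    | Sum.inr (Sum.inr u), Sum.inr (Sum.inr w) => G₂.Adj u w
    | _, _ => False

lemma det_fromBlocks_of_rowSum_colSum {V E : Type*} [Fintype V] [DecidableEq V] [Fintype E]
    [DecidableEq E] (P : Matrix V V ℝ) (R : Matrix V E ℝ) (b c w p r : ℝ) (hc : c ≠ 0)
    (hP : ∀ i, ∑ j, P i j = p) (hcol : ∀ e, ∑ v, R v e = 2) (hrow : ∀ v, ∑ e, R v e = r) :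
    (fromBlocks P (-b • R) (-b • Rᵀ) (c • (1 : Matrix E E ℝ) - (b ^ 2 * w) • of 1)).det =
      c ^ Fintype.card E *
        (P - c⁻¹ • (b ^ 2 • (R * Rᵀ) + (b ^ 2 * w * p * r / 2) • of 1)).det := by
  have hcJ : (c⁻¹ • (1 : Matrix E E ℝ)) * (c • 1) = 1 := by simp [smul_smul, hc]
  have hJc : (c • (1 : Matrix E E ℝ)) * (c⁻¹ • 1) = 1 := by simp [smul_smul, hc]
  let _ : Invertible (c • (1 : Matrix E E ℝ)) := ⟨c⁻¹ • 1, hcJ, hJc⟩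
  set K : Matrix V E ℝ := (-(b * w / 2)) • of 1 with hK
  have hPK : P * K = (-(b * w * p / 2)) • of 1 := by
    ext i j
    simp [hK, mul_apply, ← Finset.sum_mul, hP]
    ring
  have hRK : (-b • Rᵀ) * K = (b ^ 2 * w) • of 1 := by
    ext i j
    simp [hK, mul_apply, ← Finset.sum_mul, ← Finset.mul_sum, hcol]
    ring
  have hJR : (of 1 : Matrix V E ℝ) * Rᵀ = r • of 1 := by
    ext i j
    simp [mul_apply, hrow]
  have hmul : fromBlocks P (-b • R) (-b • Rᵀ) (c • (1 : Matrix E E ℝ) - (b ^ 2 * w) • of 1) *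
      fromBlocks 1 K 0 1 = fromBlocks P (P * K - b • R) (-b • Rᵀ) (c • 1) := by
    rw [fromBlocks_multiply, hRK, Matrix.mul_one, Matrix.mul_one, Matrix.mul_one, Matrix.mul_one,
      Matrix.mul_zero, Matrix.mul_zero, add_zero, add_zero, add_sub_cancel, neg_smul,
      ← sub_eq_add_neg]
  have hdet := congrArg det hmul
  rw [det_mul, det_fromBlocks_zero₂₁, det_one, det_one, one_mul, mul_one] at hdet
  rw [hdet, det_fromBlocks₂₂, det_smul, det_one, mul_one]
  congr 2
  change P - (P * K - b • R) * (c⁻¹ • 1) * (-b • Rᵀ) = _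
  congr 1
  rw [hPK, Matrix.mul_smul _ c⁻¹, Matrix.mul_one, Matrix.smul_mul, Matrix.sub_mul, Matrix.smul_mul,
    Matrix.mul_smul, hJR, Matrix.smul_mul, Matrix.mul_smul]
  congr 1
  ext i j
  simp
  ring

lemma det_fromBlocks_join {V E W : Type*} [Fintype V] [DecidableEq V] [Fintype E]
    [DecidableEq E] [Fintype W] [DecidableEq W] (P : Matrix V V ℝ) (Q : Matrix V E ℝ)
    (T : Matrix E V ℝ) (L : Matrix E E ℝ) (S : Matrix W W ℝ) (b : ℝ) (hS : S.det ≠ 0) :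
    (fromBlocks P (fromCols Q 0) (fromRows T 0)
      (fromBlocks L (-b • of 1) (-b • of 1) S)).det =
      S.det * (fromBlocks P Q T (L - (b ^ 2 * ∑ i, ∑ j, S⁻¹ i j) • of 1)).det := by
  let _ : Invertible S := invertibleOfIsUnitDet S (isUnit_iff_ne_zero.2 hS)
  rw [← det_submatrix_equiv_self (Equiv.sumAssoc V E W)]
  have h : (fromBlocks P (fromCols Q 0) (fromRows T 0)
      (fromBlocks L (-b • of 1) (-b • of 1) S)).submatrix (Equiv.sumAssoc V E W)
        (Equiv.sumAssoc V E W) =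
      fromBlocks (fromBlocks P Q T L) (fromRows 0 (-b • of 1)) (fromCols 0 (-b • of 1)) S := by
    ext ((i | i) | i) ((j | j) | j) <;> simp
  rw [h, det_fromBlocks₂₂, invOf_eq_nonsing_inv]
  congr 2
  ext (i | i) (j | j) <;> simp [mul_apply]
  simp only [← Finset.sum_mul, ← Finset.mul_sum]
  rw [Finset.sum_comm]
  ring

lemma det_smul_one_sub_sub_of_rowSum {V : Type*} [Fintype V] [DecidableEq V] (N : Matrix V V ℝ)
    (q : ℝ) (hN : ∀ i, ∑ j, N i j = q) (μ : V → ℝ) (hμ : N.charpoly = ∏ i, (X - C (μ i)))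
    (i₀ : V) (hi₀ : μ i₀ = q) (κ ρ s : ℝ) :
    (κ • (1 : Matrix V V ℝ) - ρ • N - s • of 1).det =
      (∏ i ∈ Finset.univ.erase i₀, (κ - ρ * μ i)) * (κ - ρ * q - s * Fintype.card V) := by
  have hdet (y : ℝ) : (y • (1 : Matrix V V ℝ) - ρ • N).det = ∏ i, (y - ρ * μ i) := by
    rcases eq_or_ne ρ 0 with rfl | hρ
    · simp
    · have h := congrArg (eval (y / ρ)) hμ
      rw [eval_charpoly, eval_prod] at h
      have hfac : y • (1 : Matrix V V ℝ) - ρ • N = ρ • (scalar V (y / ρ) - N) := by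
        rw [smul_sub, scalar_apply, ← smul_one_eq_diagonal, smul_smul, mul_div_cancel₀ _ hρ]
      rw [hfac, det_smul, h, Fintype.card, ← Finset.prod_const, ← Finset.prod_mul_distrib]
      refine Finset.prod_congr rfl fun i _ => ?_
      simp
      field_simp
  have hNJ : N * of 1 = q • (of 1 : Matrix V V ℝ) := by
    ext i j
    simp [mul_apply, hN]
  have hJ : ∀ t : ℝ, (1 - t • (of 1 : Matrix V V ℝ)).det = 1 - t * Fintype.card V := by
    intro t
    have h : 1 - t • (of 1 : Matrix V V ℝ) =
        1 + (replicateCol Unit fun _ : V => -t) * (replicateRow Unit fun _ : V => (1 : ℝ)) := by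
      ext i j
      simp [mul_apply, sub_eq_add_neg]
    rw [h, det_one_add_replicateCol_mul_replicateRow]
    simp [dotProduct]
    ring
  have hpoly : (X - C (ρ * q)) * (ρ • N + s • of 1).charpoly =
      (X - C (ρ * q)) * ((∏ i ∈ Finset.univ.erase i₀, (X - C (ρ * μ i))) *
        (X - C (ρ * q + s * Fintype.card V))) := by
    refine Polynomial.funext fun y => ?_
    rcases eq_or_ne y (ρ * q) with rfl | hy
    · simp
    have hy' : y - ρ * q ≠ 0 := sub_ne_zero.2 hy
    have hfac : y • (1 : Matrix V V ℝ) - (ρ • N + s • of 1) =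
        (y • 1 - ρ • N) * (1 - (s / (y - ρ * q)) • of 1) := by
      rw [mul_sub, mul_one, mul_smul_comm, sub_mul, smul_mul_assoc, smul_mul_assoc, one_mul, hNJ,
        smul_smul, ← sub_smul, smul_smul, div_mul_cancel₀ _ hy', sub_sub]
    simp only [eval_mul, eval_charpoly, eval_sub, eval_X, eval_C, eval_prod]
    rw [scalar_apply, ← smul_one_eq_diagonal y, hfac, det_mul, hdet, hJ,
      ← Finset.mul_prod_erase _ _ (Finset.mem_univ i₀), hi₀]
    field_simp
    ring
  have h := congrArg (eval κ) (mul_left_cancel₀ (X_sub_C_ne_zero _) hpoly)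
  simp only [eval_mul, eval_charpoly, eval_sub, eval_X, eval_C, eval_prod] at h
  rw [sub_sub, sub_sub, ← h, scalar_apply, ← smul_one_eq_diagonal κ]

lemma sum_ite_adj {V : Type*} [Fintype V] (G : SimpleGraph V) (v : V) :
    ∑ w, (if G.Adj v w then (1 : ℝ) else 0) = G.degree v := by
  rw [Finset.sum_boole, ← G.card_neighborFinset_eq_degree]
  congr 2
  ext w
  simp

lemma Aalpha_apply {V : Type*} [Fintype V] (G : SimpleGraph V) (α : ℝ) (i j : V) :
    Aalpha G α i j = (if i = j then α * ∑ k, (if G.Adj i k then (1 : ℝ) else 0) else 0) +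
      (1 - α) * (if G.Adj i j then 1 else 0) := by
  simp only [sum_ite_adj]
  simp [Aalpha, diagonal_apply]

lemma rEdgeJoin_adj_inl_inl {V₁ V₂ : Type*} (G₁ : SimpleGraph V₁) (G₂ : SimpleGraph V₂) (v w : V₁) :
    (rEdgeJoin G₁ G₂).Adj (.inl v) (.inl w) ↔ G₁.Adj v w := by
  have := @SimpleGraph.Adj.ne _ G₁ v w
  simp [rEdgeJoin, G₁.adj_comm w v]
  tauto

lemma rEdgeJoin_adj_inr_inr {V₁ V₂ : Type*} (G₁ : SimpleGraph V₁) (G₂ : SimpleGraph V₂) (v w : V₂) :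
    (rEdgeJoin G₁ G₂).Adj (.inr (.inr v)) (.inr (.inr w)) ↔ G₂.Adj v w := by
  have := @SimpleGraph.Adj.ne _ G₂ v w
  simp [rEdgeJoin, G₂.adj_comm w v]
  tauto

/-- The vertex-edge incidence matrix of `G`, with columns indexed by the edges of `G`. -/
def edgeIncMatrix {V : Type*} (G : SimpleGraph V) : Matrix V G.edgeSet ℝ :=
  of fun v e => if v ∈ (e : Sym2 V) then 1 else 0

lemma edgeIncMatrix_eq {V : Type*} (G : SimpleGraph V) (v : V) (e : G.edgeSet) :
    edgeIncMatrix G v e = G.incMatrix ℝ v e := by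
  simp [edgeIncMatrix, SimpleGraph.incMatrix_apply', SimpleGraph.incidenceSet]

lemma sum_edgeSet_eq {V : Type*} [Fintype V] (G : SimpleGraph V) (f : Sym2 V → ℝ)
    (hf : ∀ e ∉ G.edgeSet, f e = 0) : ∑ e : G.edgeSet, f e = ∑ e, f e := by
  rw [← Finset.sum_subset (Finset.subset_univ G.edgeFinset)
    fun e _ he => hf e (by simpa using he)]
  exact (Finset.sum_subtype _ (fun e => by simp) f).symm

lemma sum_edgeIncMatrix_col {V : Type*} [Fintype V] (G : SimpleGraph V) (e : G.edgeSet) :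
    ∑ v, edgeIncMatrix G v e = 2 := by
  simp only [edgeIncMatrix_eq]
  exact G.sum_incMatrix_apply_of_mem_edgeSet e.2

lemma sum_edgeIncMatrix_row {V : Type*} [Fintype V] (G : SimpleGraph V) (v : V) :
    ∑ e, edgeIncMatrix G v e = G.degree v := by
  simp only [edgeIncMatrix_eq]
  rw [sum_edgeSet_eq G (G.incMatrix ℝ v), SimpleGraph.sum_incMatrix_apply]
  intro e he
  exact G.incMatrix_of_notMem_incidenceSet fun h => he h.1

lemma edgeIncMatrix_mul_transpose {V : Type*} [Fintype V] (G : SimpleGraph V) :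
    edgeIncMatrix G * (edgeIncMatrix G)ᵀ =
      diagonal (fun v => (G.degree v : ℝ)) + G.adjMatrix ℝ := by
  ext i j
  have h := congrFun₂ (G.incMatrix_mul_transpose (R := ℝ)) i j
  simp only [mul_apply, transpose_apply, edgeIncMatrix_eq] at h ⊢
  rw [sum_edgeSet_eq G (fun e => G.incMatrix ℝ i e * G.incMatrix ℝ j e), h]
  · rcases eq_or_ne i j with rfl | hij <;> simp [*]
  · intro e he
    simp [G.incMatrix_of_notMem_incidenceSet (a := i) (e := e) fun h => he h.1]

lemma charmatrix_Aalpha_rEdgeJoin {V₁ V₂ : Type*} [Fintype V₁] [DecidableEq V₁] [Fintype V₂]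
    [DecidableEq V₂] (G₁ : SimpleGraph V₁) (G₂ : SimpleGraph V₂) {r : ℕ}
    (hreg : G₁.IsRegularOfDegree r) (α x : ℝ) :
    x • 1 - Aalpha (rEdgeJoin G₁ G₂) α =
      fromBlocks ((x - α * r) • 1 - Aalpha G₁ α)
        (fromCols (-(1 - α) • edgeIncMatrix G₁) 0)
        (fromRows (-(1 - α) • (edgeIncMatrix G₁)ᵀ) 0)
        (fromBlocks ((x - 2 * α - α * Fintype.card V₂) • 1) (-(1 - α) • of 1) (-(1 - α) • of 1)
          ((x - α * Fintype.card G₁.edgeSet) • 1 - Aalpha G₂ α)) := by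
  have hcol (e : G₁.edgeSet) (inst : ∀ v, Decidable (v ∈ (e : Sym2 V₁))) :
      ∑ v, @ite ℝ (v ∈ (e : Sym2 V₁)) (inst v) 1 0 = 2 := by
    rw [← sum_edgeIncMatrix_col G₁ e]
    simp only [edgeIncMatrix, of_apply]
    congr!
  have hrow (v : V₁) (inst : ∀ e : G₁.edgeSet, Decidable (v ∈ (e : Sym2 V₁))) :
      ∑ e : G₁.edgeSet, @ite ℝ (v ∈ (e : Sym2 V₁)) (inst e) 1 0 = r := by
    rw [← hreg.degree_eq v, ← sum_edgeIncMatrix_row G₁ v]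
    simp only [edgeIncMatrix, of_apply]
    congr!
  have hd (v) : ∑ k, (if G₁.Adj v k then (1 : ℝ) else 0) = r := by
    rw [sum_ite_adj, hreg.degree_eq]
  have h12 (v e) : (rEdgeJoin G₁ G₂).Adj (.inl v) (.inr (.inl e)) ↔ v ∈ (e : Sym2 V₁) := by
    simp [rEdgeJoin]
  have h21 (v e) : (rEdgeJoin G₁ G₂).Adj (.inr (.inl e)) (.inl v) ↔ v ∈ (e : Sym2 V₁) := by
    simp [rEdgeJoin]
  have h13 (v w) : ¬ (rEdgeJoin G₁ G₂).Adj (.inl v) (.inr (.inr w)) := by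
    simp [rEdgeJoin]
  have h31 (v w) : ¬ (rEdgeJoin G₁ G₂).Adj (.inr (.inr w)) (.inl v) := by
    simp [rEdgeJoin]
  have h22 (v w) : ¬ (rEdgeJoin G₁ G₂).Adj (.inr (.inl w)) (.inr (.inl v)) := by
    simp [rEdgeJoin]
  have h23 (v w) : (rEdgeJoin G₁ G₂).Adj (.inr (.inl v)) (.inr (.inr w)) := by
    simp [rEdgeJoin]
  have h32 (v w) : (rEdgeJoin G₁ G₂).Adj (.inr (.inr v)) (.inr (.inl w)) := by
    simp [rEdgeJoin]
  ext (i | i | i) (j | j | j) <;>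
  simp [Aalpha_apply, edgeIncMatrix, Matrix.one_apply, rEdgeJoin_adj_inl_inl,
    rEdgeJoin_adj_inr_inr, h12, h13, h21, h31, h22, h23, h32, hd, hcol, hrow,
    -Finset.sum_boole]
  · by_cases h : i = j <;> simp [h, -Finset.sum_boole]
    ring
  · split_ifs <;> simp
  · split_ifs <;> simp
  · by_cases h : i = j <;> simp [h, -Finset.sum_boole]
    ring
  · by_cases h : i = j <;> simp [h, -Finset.sum_boole]
    ring

lemma sum_Aalpha {V : Type*} [Fintype V] (G : SimpleGraph V) (α : ℝ) (i : V) :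
    ∑ j, Aalpha G α i j = G.degree i := by
  simp only [Aalpha_apply, Finset.sum_add_distrib, ← Finset.mul_sum, sum_ite_adj]
  simp
  ring

lemma le_of_isRoot_charpoly_Aalpha {V : Type*} [Fintype V] [DecidableEq V] (G : SimpleGraph V)
    {α : ℝ} (hα : α ∈ Set.Icc (0 : ℝ) 1) {r : ℕ} (hreg : G.IsRegularOfDegree r) {t : ℝ}
    (ht : (Aalpha G α).charpoly.IsRoot t) : t ≤ r := by
  rw [← Matrix.mem_spectrum_iff_isRoot_charpoly, ← spectrum_toLin',
    ← Module.End.hasEigenvalue_iff_mem_spectrum] at ht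
  obtain ⟨k, hk⟩ := eigenvalue_mem_ball ht
  have hnn (i j : V) : 0 ≤ Aalpha G α i j := by
    have := hα.1
    have := sub_nonneg.2 hα.2
    simp [Aalpha, diagonal_apply]
    split_ifs <;> positivity
  simp only [Real.norm_of_nonneg (hnn _ _)] at hk
  rw [Metric.mem_closedBall, Real.dist_eq] at hk
  have h1 := sum_Aalpha G α k
  rw [← Finset.add_sum_erase _ _ (Finset.mem_univ k), hreg.degree_eq] at h1
  linarith [le_abs_self (t - Aalpha G α k k)]

lemma isRoot_charpoly_Aalpha {V : Type*} [Fintype V] [DecidableEq V] [Nonempty V]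
    (G : SimpleGraph V) (α : ℝ) {r : ℕ} (hreg : G.IsRegularOfDegree r) :
    (Aalpha G α).charpoly.IsRoot r := by
  rw [IsRoot.def, eval_charpoly]
  refine exists_mulVec_eq_zero_iff.1 ⟨1, one_ne_zero, ?_⟩
  ext i
  rw [scalar_apply, ← smul_one_eq_diagonal, sub_mulVec, smul_mulVec, one_mulVec]
  simp [mulVec, dotProduct, sum_Aalpha, hreg.degree_eq]

lemma coronal_eq_sum {n : Type*} [Fintype n] [DecidableEq n] (M : Matrix n n ℝ) (x : ℝ) :
    coronal M x = ∑ i, ∑ j, (x • (1 : Matrix n n ℝ) - M)⁻¹ i j := by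
  unfold coronal
  congr!

lemma schur_complement_eq_smul {V : Type*} [Fintype V] [DecidableEq V] (G : SimpleGraph V)
    {r : ℕ} (hreg : G.IsRegularOfDegree r) (α y s : ℝ) {c : ℝ} (hc : c ≠ 0) :
    (y - α * r) • (1 : Matrix V V ℝ) - Aalpha G α -
      c⁻¹ • ((1 - α) ^ 2 • (edgeIncMatrix G * (edgeIncMatrix G)ᵀ) + s • of 1) =
      c⁻¹ • ((c * (y - α * r) + α * (1 - α) * r - (1 - α) ^ 2 * r) • 1 -
        (c + (1 - α)) • Aalpha G α - s • of 1) := by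
  rw [edgeIncMatrix_mul_transpose]
  ext i j
  by_cases h : i = j <;> by_cases h' : G.Adj i j <;>
    simp [Aalpha, hreg.degree_eq, h, h'] <;> field_simp <;> ring

lemma apply_zero_eq_of_charpoly_Aalpha {n : ℕ} [NeZero n] (G : SimpleGraph (Fin n)) {α : ℝ}
    (hα : α ∈ Set.Icc (0 : ℝ) 1) {r : ℕ} (hreg : G.IsRegularOfDegree r) {μ : Fin n → ℝ}
    (hμ : Antitone μ) (hμch : (Aalpha G α).charpoly = ∏ i, (X - C (μ i))) : μ 0 = r := by
  have hle : μ 0 ≤ r := by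
    refine le_of_isRoot_charpoly_Aalpha G hα hreg ?_
    rw [hμch, IsRoot.def, eval_prod]
    exact Finset.prod_eq_zero (Finset.mem_univ 0) (by simp)
  have h := isRoot_charpoly_Aalpha G α hreg
  rw [hμch, IsRoot.def, eval_prod, Finset.prod_eq_zero_iff] at h
  obtain ⟨i, -, hi⟩ := h
  simp only [eval_sub, eval_X, eval_C] at hi
  linarith [hμ (Fin.zero_le i)]

lemma det_smul_one_sub_Aalpha_rEdgeJoin {V₁ V₂ : Type*} [Fintype V₁] [DecidableEq V₁]
    [Fintype V₂] [DecidableEq V₂] (G₁ : SimpleGraph V₁) (G₂ : SimpleGraph V₂) {r : ℕ}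
    (hreg : G₁.IsRegularOfDegree r) (α x c y w : ℝ) (hc : c ≠ 0)
    (hcx : c = x - 2 * α - α * Fintype.card V₂)
    (hy : y = x - α * Fintype.card G₁.edgeSet)
    (hS : (y • (1 : Matrix V₂ V₂ ℝ) - Aalpha G₂ α).det ≠ 0)
    (hw : ∑ i, ∑ j, (y • (1 : Matrix V₂ V₂ ℝ) - Aalpha G₂ α)⁻¹ i j = w)
    (μ : V₁ → ℝ) (hμ : (Aalpha G₁ α).charpoly = ∏ i, (X - C (μ i))) (i₀ : V₁)
    (hi₀ : μ i₀ = r) :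
    (x • 1 - Aalpha (rEdgeJoin G₁ G₂) α).det =
      c ^ ((Fintype.card G₁.edgeSet : ℤ) - (Fintype.card V₁ : ℤ)) *
        (y • 1 - Aalpha G₂ α).det *
        (∏ i ∈ Finset.univ.erase i₀,
          (c * (x - α * r) + α * (1 - α) * r - (1 - α) ^ 2 * r - (c + (1 - α)) * μ i)) *
        (c * (x - α * r) + α * (1 - α) * r - (1 - α) ^ 2 * r - (c + (1 - α)) * r -
          Fintype.card G₁.edgeSet * (1 - α) ^ 2 * (x - α * r - r) * w) := by
  have hcard : (Fintype.card V₁ : ℝ) * r = Fintype.card G₁.edgeSet * 2 := by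
    have h := Finset.sum_comm (s := Finset.univ) (t := Finset.univ) (f := edgeIncMatrix G₁)
    simp only [sum_edgeIncMatrix_col, sum_edgeIncMatrix_row, hreg.degree_eq] at h
    simpa only [Finset.sum_const, Finset.card_univ, nsmul_eq_mul] using h
  have hP (i) : ∑ j, ((x - α * r) • (1 : Matrix V₁ V₁ ℝ) - Aalpha G₁ α) i j =
      x - α * r - r := by
    simp [Finset.sum_sub_distrib, sum_Aalpha, hreg.degree_eq, one_apply]
  rw [charmatrix_Aalpha_rEdgeJoin G₁ G₂ hreg α x, ← hcx, ← hy,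
    det_fromBlocks_join _ _ _ _ _ _ hS, hw,
    det_fromBlocks_of_rowSum_colSum _ _ _ _ _ _ _ hc hP (sum_edgeIncMatrix_col G₁)
      (fun v => by rw [sum_edgeIncMatrix_row, hreg.degree_eq]),
    schur_complement_eq_smul G₁ hreg α x _ hc, det_smul,
    det_smul_one_sub_sub_of_rowSum _ (r : ℝ)
      (fun i => by rw [sum_Aalpha, hreg.degree_eq]) μ hμ i₀ hi₀,
    zpow_sub₀ hc, zpow_natCast, zpow_natCast, inv_pow]
  have hlast : (1 - α) ^ 2 * w * (x - α * r - r) * r / 2 * Fintype.card V₁ =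
      Fintype.card G₁.edgeSet * (1 - α) ^ 2 * (x - α * r - r) * w := by
    linear_combination (1 - α) ^ 2 * w * (x - α * r - r) / 2 * hcard
  rw [hlast]
  ring

/-- Theorem 6.1: the `A_α`-characteristic polynomial of the `R`-edge join `G₁⟨e⟩G₂`
of an `r₁`-regular graph `G₁` (on `n₁` vertices and `m₁` edges) and an arbitrary graph
`G₂` (on `n₂` vertices). -/
theorem Aalpha_charpoly_rEdgeJoin
    {n₁ m₁ n₂ r₁ : ℕ} (G₁ : SimpleGraph (Fin n₁)) (G₂ : SimpleGraph (Fin n₂))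
    (hconn : G₁.Connected) (hreg : G₁.IsRegularOfDegree r₁)
    (hm : Fintype.card G₁.edgeSet = m₁)
    (α : ℝ) (hα : α ∈ Set.Icc (0 : ℝ) 1)
    (μ : Fin n₁ → ℝ) (hμ : Antitone μ)
    (hμch : (Aalpha G₁ α).charpoly = ∏ i, (X - C (μ i)))
    (x : ℝ)
    (hx₁ : ((x - α * m₁) • (1 : Matrix (Fin n₂) (Fin n₂) ℝ) - Aalpha G₂ α).det ≠ 0)
    (hx₂ : x ≠ 2 * α + α * n₂) :
    ((Aalpha (rEdgeJoin G₁ G₂) α).charpoly).eval x =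
      (x - 2 * α - α * n₂) ^ ((m₁ : ℤ) - (n₁ : ℤ)) *
        ((Aalpha G₂ α).charpoly).eval (x - α * m₁) *
        (∏ i ∈ Finset.univ.filter (fun i : Fin n₁ => i.val ≠ 0),
          (x ^ 2 - (2 * α + α * r₁ + α * n₂ + μ i) * x
            + α ^ 2 * r₁ * n₂ + 3 * α * r₁ - r₁ - (1 - 3 * α - α * n₂) * μ i)) *
        (x ^ 2 - (2 * α + α * r₁ + α * n₂ + r₁) * x
          + α ^ 2 * r₁ * n₂ + 6 * α * r₁ - 2 * r₁ + α * r₁ * n₂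
          - m₁ * (1 - α) ^ 2 * (x - α * r₁ - r₁) * coronal (Aalpha G₂ α) (x - α * m₁)) := by
  have := hconn.nonempty
  have : NeZero n₁ := ⟨fun h => by subst h; exact this.elim fun i => i.elim0⟩
  have hμ₀ : μ 0 = r₁ := apply_zero_eq_of_charpoly_Aalpha G₁ hα hreg hμ hμch
  have hc : x - 2 * α - α * n₂ ≠ 0 := fun h => hx₂ (by linarith)
  have hfilter : Finset.univ.filter (fun i : Fin n₁ => i.val ≠ 0) = Finset.univ.erase 0 := by
    ext i
    simp
  rw [eval_charpoly, eval_charpoly, scalar_apply, scalar_apply, ← smul_one_eq_diagonal x,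
    ← smul_one_eq_diagonal (x - α * m₁), hfilter,
    det_smul_one_sub_Aalpha_rEdgeJoin G₁ G₂ hreg α x _ (x - α * m₁)
      (coronal (Aalpha G₂ α) (x - α * m₁)) hc (by rw [Fintype.card_fin]) (by rw [hm]) hx₁
      (coronal_eq_sum _ _).symm μ hμch 0 hμ₀, hm, Fintype.card_fin]
  congr 1
  · congr 1
    refine Finset.prod_congr rfl fun i _ => ?_
    ring
  · ring
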